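/- In the online Ramsey game with targets red C₄ and blue P₆, consider the position in which the five edges v₁v₂, v₂v₃, v₃v₄, v₄v₅, v₅v₆ of a path on six distinct vertices have been colored red, red, blue, red, red respectively (case R3). From this position Builder can force a red copy of C₄ or a blue copy of P₆ within at most 6 additional rounds, so within at most 11 rounds in total. -/

import Mathlib

open SimpleGraph

/-- The set `S` of edges of the infinite complete graph on `ℕ` contains a copy of
the graph `G`: there is an injective map of the vertices of `G` into `ℕ` sending
every edge of `G` into `S`. -/
def HasCopy {V : Type*} (G : SimpleGraph V) (S : Set (Sym2 ℕ)) : Prop :=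
  ∃ f : V → ℕ, Function.Injective f ∧ ∀ a b, G.Adj a b → s(f a, f b) ∈ S

/-- `BuilderWinsIn G H R B r` means: in the online Ramsey game with targets a red copy
of `G` and a blue copy of `H`, from the position in which the edges in `R` have been
colored red and the edges in `B` have been colored blue, Builder has a strategy that
guarantees, against every Painter strategy, that within at most `r` further rounds the
colored edges contain a red copy of `G` or a blue copy of `H`.  (In each round Builder
chooses a previously unchosen non-loop edge of the infinite complete graph on `ℕ`, and
Painter immediately colors it red or blue; so Builder wins within `r + 1` rounds iff he
has already won, or he can choose an edge such that whichever color Painter gives it,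
he can win within `r` further rounds.) -/
def BuilderWinsIn {V W : Type*} (G : SimpleGraph V) (H : SimpleGraph W) :
    Set (Sym2 ℕ) → Set (Sym2 ℕ) → ℕ → Prop
  | R, B, 0 => HasCopy G R ∨ HasCopy H B
  | R, B, (r + 1) => HasCopy G R ∨ HasCopy H B ∨
      ∃ e : Sym2 ℕ, ¬ e.IsDiag ∧ e ∉ R ∧ e ∉ B ∧
        BuilderWinsIn G H (insert e R) B r ∧ BuilderWinsIn G H R (insert e B) r

/-- The online size Ramsey number `ř(G, H)`: the least `t` such that, starting from the
empty position, Builder can force a red copy of `G` or a blue copy of `H` within at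
most `t` rounds. -/
noncomputable def onlineRamsey {V W : Type*} (G : SimpleGraph V) (H : SimpleGraph W) : ℕ :=
  sInf {t | BuilderWinsIn G H ∅ ∅ t}

/-!
Builder first plays `v₁v₆`, closing the path to a hexagon. Afterwards most of his moves join the
ends of a red path on four vertices, so that Painter has to answer blue.

If `v₁v₆` is red, the hexagon has a single blue edge, and its three long diagonals are all forced
blue; together with the blue edge they form blue paths on four and two vertices, which Builder can
join. If `v₁v₆` is blue, the hexagon has two opposite blue edges, and Builder plays up to three of
the edges `v₁v₅`, `v₂v₄`, `v₂v₅`: the first one colored red forces all that is still missing from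
a blue path on six vertices, and if all three are blue they complete such a path.
-/

/-- `f` traverses a path on `n + 1` distinct vertices all of whose edges lie in `S`. It is the
certificate from which monochromatic copies of path graphs and cycle graphs are read off. -/
structure IsPathIn {n : ℕ} (f : Fin (n + 1) → ℕ) (S : Set (Sym2 ℕ)) : Prop where
  injective : Function.Injective f
  mem : ∀ i : Fin n, s(f i.castSucc, f i.succ) ∈ S

namespace IsPathIn

variable {S : Set (Sym2 ℕ)} {n : ℕ}

theorem hasCopy_pathGraph {f : Fin (n + 1) → ℕ} (hf : IsPathIn f S) :
    HasCopy (pathGraph (n + 1)) S := by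
  have mem_of_val_succ {a b : Fin (n + 1)} (hab : (a : ℕ) + 1 = b) : s(f a, f b) ∈ S := by
    have hb : b = Fin.succ ⟨a, by lia⟩ := Fin.ext hab.symm
    exact hb ▸ hf.mem ⟨a, by lia⟩
  refine ⟨f, hf.injective, fun a b hab => ?_⟩
  rcases pathGraph_adj.1 hab with h | h
  · exact mem_of_val_succ h
  · exact Sym2.eq_swap ▸ mem_of_val_succ h

theorem hasCopy_cycleGraph {f : Fin (n + 2) → ℕ} (hf : IsPathIn f S) :
    HasCopy (cycleGraph (n + 2)) (insert s(f 0, f (Fin.last (n + 1))) S) := by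
  have mem_add_one (i : Fin (n + 2)) :
      s(f i, f (i + 1)) ∈ insert s(f 0, f (Fin.last (n + 1))) S := by
    induction i using Fin.lastCases with
    | last => simp [Sym2.eq_swap]
    | cast i => simpa using Or.inr (hf.mem i)
  refine ⟨f, hf.injective, fun a b hab => ?_⟩
  rcases cycleGraph_adj.1 hab with h | h
  · obtain rfl : a = b + 1 := by rw [← h, add_sub_cancel]
    rw [Sym2.eq_swap (a := f (b + 1))]
    exact mem_add_one b
  · obtain rfl : b = a + 1 := by rw [← h, add_sub_cancel]
    exact mem_add_one a

end IsPathIn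

namespace BuilderWinsIn

variable {V W : Type*} {G : SimpleGraph V} {H : SimpleGraph W} {R B : Set (Sym2 ℕ)} {r n : ℕ}

theorem of_red (h : HasCopy G R) : BuilderWinsIn G H R B r := by
  cases r <;> exact Or.inl h

theorem of_blue (h : HasCopy H B) : BuilderWinsIn G H R B r := by
  cases r
  · exact Or.inr h
  · exact Or.inr (Or.inl h)

theorem succ (h : BuilderWinsIn G H R B r) : BuilderWinsIn G H R B (r + 1) := by
  induction r generalizing R B with
  | zero => exact h.elim of_red of_blue
  | succ r ih =>
    obtain hred | hblue | ⟨e, hdiag, heR, heB, hred, hblue⟩ := h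
    · exact of_red hred
    · exact of_blue hblue
    · exact Or.inr (Or.inr ⟨e, hdiag, heR, heB, ih hred, ih hblue⟩)

-- If the edge has been chosen before, one of the continuations starts from the current position.
theorem of_move {a b : ℕ} (hab : a ≠ b) (hred : BuilderWinsIn G H (insert s(a, b) R) B r)
    (hblue : BuilderWinsIn G H R (insert s(a, b) B) r) : BuilderWinsIn G H R B (r + 1) := by
  by_cases hR : s(a, b) ∈ R
  · rw [Set.insert_eq_of_mem hR] at hred
    exact hred.succ
  by_cases hB : s(a, b) ∈ B
  · rw [Set.insert_eq_of_mem hB] at hblue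
    exact hblue.succ
  exact Or.inr (Or.inr ⟨s(a, b), mt Sym2.mk_isDiag_iff.1 hab, hR, hB, hred, hblue⟩)

theorem of_forced_blue (f : Fin (n + 2) → ℕ) (hf : IsPathIn f R)
    (hblue : BuilderWinsIn (cycleGraph (n + 2)) H R
      (insert s(f 0, f (Fin.last (n + 1))) B) r) :
    BuilderWinsIn (cycleGraph (n + 2)) H R B (r + 1) :=
  of_move (hf.injective.ne Fin.last_pos.ne) (of_red hf.hasCopy_cycleGraph) hblue

theorem of_blue_path (f : Fin (n + 1) → ℕ) (hf : IsPathIn f B) :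
    BuilderWinsIn G (pathGraph (n + 1)) R B r :=
  of_blue hf.hasCopy_pathGraph

end BuilderWinsIn

section Hexagon

open BuilderWinsIn

variable {p : Fin 6 → ℕ} {R B : Set (Sym2 ℕ)}

theorem builderWinsIn_five_of_hexagon_one_blue_edge (hp : IsPathIn p R)
    (hB : s(p 0, p 5) ∈ B) :
    BuilderWinsIn (cycleGraph 4) (pathGraph 6) R B 5 := by
  have inj := hp.injective
  have hR : s(p 0, p 1) ∈ R ∧ s(p 1, p 2) ∈ R ∧ s(p 2, p 3) ∈ R ∧ s(p 3, p 4) ∈ R ∧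
      s(p 4, p 5) ∈ R := by
    simpa [Fin.forall_fin_succ] using hp.mem
  refine of_forced_blue (p ∘ ![0, 1, 2, 3])
    ⟨inj.comp (by decide), by simp [Fin.forall_fin_succ, hR]⟩ ?_
  refine of_forced_blue (p ∘ ![1, 2, 3, 4])
    ⟨inj.comp (by decide), by simp [Fin.forall_fin_succ, hR]⟩ ?_
  refine of_forced_blue (p ∘ ![2, 3, 4, 5])
    ⟨inj.comp (by decide), by simp [Fin.forall_fin_succ, hR]⟩ ?_
  -- The blue paths `p 3, p 0, p 5, p 2` and `p 1, p 4` can be joined by `p 2 p 4` or by `p 1 p 3`;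
  -- if the first edge is red, it creates the red path `p 1, p 2, p 4, p 3` and forces the second.
  refine of_move (a := p 2) (b := p 4) (inj.ne (by decide)) ?_ ?_
  · refine of_forced_blue (p ∘ ![1, 2, 4, 3])
      ⟨inj.comp (by decide), by simp [Fin.forall_fin_succ, hR, Sym2.eq_swap]⟩ ?_
    exact of_blue_path (p ∘ ![4, 1, 3, 0, 5, 2])
      ⟨inj.comp (by decide), by simp [Fin.forall_fin_succ, hB, Sym2.eq_swap]⟩
  · exact of_blue_path (p ∘ ![3, 0, 5, 2, 4, 1])
      ⟨inj.comp (by decide), by simp [Fin.forall_fin_succ, hB, Sym2.eq_swap]⟩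

theorem builderWinsIn_four_of_hexagon_opposite_blue_edges (hp : Function.Injective p)
    (hR : {s(p 0, p 1), s(p 1, p 2), s(p 3, p 4), s(p 4, p 5)} ⊆ R)
    (hB : {s(p 0, p 5), s(p 2, p 3)} ⊆ B) :
    BuilderWinsIn (cycleGraph 4) (pathGraph 6) R B 4 := by
  simp only [Set.insert_subset_iff, Set.singleton_subset_iff] at hR hB
  refine of_move (a := p 0) (b := p 4) (hp.ne (by decide)) ?_ ?_
  · refine of_forced_blue (p ∘ ![2, 1, 0, 4])
      ⟨hp.comp (by decide), by simp [Fin.forall_fin_succ, hR, Sym2.eq_swap]⟩ ?_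
    refine of_forced_blue (p ∘ ![1, 0, 4, 3])
      ⟨hp.comp (by decide), by simp [Fin.forall_fin_succ, hR, Sym2.eq_swap]⟩ ?_
    refine of_forced_blue (p ∘ ![1, 0, 4, 5])
      ⟨hp.comp (by decide), by simp [Fin.forall_fin_succ, hR, Sym2.eq_swap]⟩ ?_
    exact of_blue_path (p ∘ ![4, 2, 3, 1, 5, 0])
      ⟨hp.comp (by decide), by simp [Fin.forall_fin_succ, hB, Sym2.eq_swap]⟩
  refine of_move (a := p 1) (b := p 3) (hp.ne (by decide)) ?_ ?_
  · refine of_forced_blue (p ∘ ![2, 1, 3, 4])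
      ⟨hp.comp (by decide), by simp [Fin.forall_fin_succ, hR, Sym2.eq_swap]⟩ ?_
    refine of_forced_blue (p ∘ ![1, 3, 4, 5])
      ⟨hp.comp (by decide), by simp [Fin.forall_fin_succ, hR, Sym2.eq_swap]⟩ ?_
    exact of_blue_path (p ∘ ![3, 2, 4, 0, 5, 1])
      ⟨hp.comp (by decide), by simp [Fin.forall_fin_succ, hB, Sym2.eq_swap]⟩
  refine of_move (a := p 1) (b := p 4) (hp.ne (by decide)) ?_ ?_
  · refine of_forced_blue (p ∘ ![2, 1, 4, 5])
      ⟨hp.comp (by decide), by simp [Fin.forall_fin_succ, hR, Sym2.eq_swap]⟩ ?_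
    exact of_blue_path (p ∘ ![4, 0, 5, 2, 3, 1])
      ⟨hp.comp (by decide), by simp [Fin.forall_fin_succ, hB, Sym2.eq_swap]⟩
  · exact of_blue_path (p ∘ ![5, 0, 4, 1, 3, 2])
      ⟨hp.comp (by decide), by simp [Fin.forall_fin_succ, hB, Sym2.eq_swap]⟩

end Hexagon

/-- Case `R3`: in the online Ramsey game with targets red `C₄` and blue `P₆`,
from the position in which the five edges `v₁v₂, v₂v₃, v₃v₄, v₄v₅, v₅v₆` of a path on
six distinct vertices have been colored red, red, blue, red, red respectively,
Builder can force a red copy of `C₄` or a blue copy of `P₆` within at most 6 additional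
rounds (so within at most 11 rounds in total). -/
theorem builder_wins_case_R3 (v : Fin 6 → ℕ) (hv : Function.Injective v) :
    BuilderWinsIn (cycleGraph 4) (pathGraph 6)
      {s(v 0, v 1), s(v 1, v 2), s(v 3, v 4), s(v 4, v 5)}
      {s(v 2, v 3)} 6 := by
  refine BuilderWinsIn.of_move (a := v 0) (b := v 5) (hv.ne (by decide)) ?closing_red ?closing_blue
  case closing_red =>
    have red_path : IsPathIn (v ∘ ![2, 1, 0, 5, 4, 3]) (insert s(v 0, v 5)
        {s(v 0, v 1), s(v 1, v 2), s(v 3, v 4), s(v 4, v 5)}) :=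
      ⟨hv.comp (by decide), by simp [Fin.forall_fin_succ]⟩
    exact builderWinsIn_five_of_hexagon_one_blue_edge red_path (by simp)
  case closing_blue =>
    exact (builderWinsIn_four_of_hexagon_opposite_blue_edges hv .rfl .rfl).succ
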